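/- Let T > 0 and let F̲, F̄ : [0,T] × ℝ → ℝ satisfy F̲ ≤ F̄ pointwise, with t ↦ F̄(t,y) and t ↦ F̲(t,y) Lebesgue measurable for each y, and assume that for every M > 0 there exist constants L_M, K_M such that for all t ∈ [0,T] both F̄(t,·) and F̲(t,·) are L_M-Lipschitz on [−M, M] and bounded in absolute value by K_M on [−M, M]. Let h̲ ≤ h̄ be real numbers. Suppose there exist a constant λ ≤ h̲ with F̲(t, λ) ≥ 0 for all t, and constants C₁ > 0, C₀ ≥ 0, ε > 0 such that F̄(t,y) ≤ 2εy³ + C₁y + C₀ for all t and all y ≥ 0, and 2εC₂³ ≤ 1, where C₂ := e^{C₁T}·max(h̄, 0) + ((C₀+1)/C₁)(e^{C₁T} − 1). Then the two dominating backward ODEs ȳ(t) = h̄ + ∫_t^T F̄(s, ȳ(s)) ds and y̲(t) = h̲ + ∫_t^T F̲(s, y̲(s)) ds admit continuous solutions ȳ, y̲ on [0,T] with λ ≤ y̲(t) ≤ C₂ and λ ≤ ȳ(t) ≤ C₂ for all t ∈ [0,T]. -/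

import Mathlib

open MeasureTheory Set

/-!
Both equations are solved between barriers. The constant `λ` is a lower barrier, since
`F̲(t, λ) ≥ 0`. As an upper barrier take the backward solution `φ` of the linear equation
`φ' = -(C₁ φ + C₀ + 1)`, `φ(T) = max(h̄, 0)`. It takes values in `[0, C₂]`, where `2 ε y³ ≤ 1`, so
the growth condition gives `F̄(t, φ) ≤ C₁ φ + C₀ + 1 = -φ'`. Truncating the state variable at the
two barriers makes a generator globally Lipschitz, and the truncated equation is solved by the
contraction principle for a weighted supremum norm. On any interval where its solution lies beyond
a barrier, the truncated generator takes the values of `F` along that barrier, so backward in time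
the solution does not move away from the barrier; hence the barriers are never crossed and the
truncation is inactive.
-/

open scoped NNReal

/-- Continuous solutions on `[a, b]` of the backward equation `-y' = F(t, y)`, `y(b) = h`, in
integrated form. -/
def IsBackwardSolution {E : Type*} [NormedAddCommGroup E] [NormedSpace ℝ E]
    (F : ℝ → E → E) (a b : ℝ) (h : E) (y : ℝ → E) : Prop :=
  ContinuousOn y (Icc a b) ∧ ∀ t ∈ Icc a b, y t = h + ∫ s in t..b, F s (y s)

section GloballyLipschitz

variable {E : Type*} [NormedAddCommGroup E] [NormedSpace ℝ E] {F : ℝ → E → E} {K : ℝ≥0} {a b : ℝ}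

theorem integral_mul_exp_mul_sub (c t b : ℝ) :
    ∫ s in t..b, c * Real.exp (c * (b - s)) = Real.exp (c * (b - t)) - 1 := by
  have hderiv (s : ℝ) : HasDerivAt (fun s => -Real.exp (c * (b - s)))
      (c * Real.exp (c * (b - s))) s := by
    refine (((hasDerivAt_id s).const_sub b).const_mul c).exp.neg.congr_deriv ?_
    simp only [id]
    ring
  rw [intervalIntegral.integral_eq_sub_of_hasDerivAt (fun s _ => hderiv s)
    ((by fun_prop : Continuous _).intervalIntegrable _ _)]
  simp only [sub_self, mul_zero, Real.exp_zero]
  ring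

theorem norm_integral_sub_integral_le_exp {t D : ℝ} {y w : ℝ → E} (ht : t ≤ b) (hD : 0 ≤ D)
    (hF : ∀ s ∈ Icc t b, LipschitzWith K (F s))
    (hy : IntervalIntegrable (fun s => F s (y s)) volume t b)
    (hw : IntervalIntegrable (fun s => F s (w s)) volume t b)
    (hyw : ∀ s ∈ Icc t b, ‖y s - w s‖ ≤ Real.exp (2 * K * (b - s)) * D) :
    ‖(∫ s in t..b, F s (y s)) - ∫ s in t..b, F s (w s)‖
      ≤ Real.exp (2 * K * (b - t)) * (D / 2) := by
  rw [← intervalIntegral.integral_sub hy hw]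
  calc ‖∫ s in t..b, F s (y s) - F s (w s)‖
      ≤ ∫ s in t..b, (2 * K * Real.exp (2 * K * (b - s))) * (D / 2) := by
        refine intervalIntegral.norm_integral_le_of_norm_le ht ?_
          ((by fun_prop : Continuous _).intervalIntegrable _ _)
        filter_upwards with s hs
        have hs : s ∈ Icc t b := Ioc_subset_Icc_self hs
        calc ‖F s (y s) - F s (w s)‖ ≤ K * ‖y s - w s‖ := (hF s hs).norm_sub_le _ _
          _ ≤ K * (Real.exp (2 * K * (b - s)) * D) := by gcongr; exact hyw s hs
          _ = 2 * K * Real.exp (2 * K * (b - s)) * (D / 2) := by ring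
    _ = (Real.exp (2 * K * (b - t)) - 1) * (D / 2) := by
        rw [intervalIntegral.integral_mul_const, integral_mul_exp_mul_sub]
    _ ≤ Real.exp (2 * K * (b - t)) * (D / 2) := by gcongr; linarith

/-- The function on `ℝ` whose weighted values `exp (-c (b - t)) • y t` on `[a, b]` are `z`. The
supremum norm of `z` is then the Bielecki norm of `y`, for which the Picard map contracts on an
interval of any length. -/
noncomputable def bieleckiExtend (hab : a ≤ b) (c : ℝ) (z : C(Icc a b, E)) (t : ℝ) : E :=
  Real.exp (c * (b - t)) • z (projIcc a b hab t)

theorem continuous_bieleckiExtend (hab : a ≤ b) (c : ℝ) (z : C(Icc a b, E)) :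
    Continuous (bieleckiExtend hab c z) := by
  unfold bieleckiExtend
  fun_prop

theorem norm_bieleckiExtend_sub_le (hab : a ≤ b) (c : ℝ) (z w : C(Icc a b, E)) (t : ℝ) :
    ‖bieleckiExtend hab c z t - bieleckiExtend hab c w t‖
      ≤ Real.exp (c * (b - t)) * dist z w := by
  rw [bieleckiExtend, bieleckiExtend, ← smul_sub, norm_smul,
    Real.norm_of_nonneg (Real.exp_nonneg _), ← dist_eq_norm]
  gcongr
  exact ContinuousMap.dist_apply_le_dist _

/-- The Picard map `y ↦ h + ∫ s in t..b, F s (y s)` in the weighted variable `z` of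
`bieleckiExtend`. -/
noncomputable def bieleckiPicard (F : ℝ → E → E) (hab : a ≤ b) (c : ℝ) (h : E)
    (z : C(Icc a b, E)) (t : ℝ) : E :=
  Real.exp (-(c * (b - t))) • (h + ∫ s in t..b, F s (bieleckiExtend hab c z s))

theorem continuousOn_bieleckiPicard (hab : a ≤ b) (c : ℝ) (h : E) {z : C(Icc a b, E)}
    (hint : IntervalIntegrable (fun s => F s (bieleckiExtend hab c z s)) volume a b) :
    ContinuousOn (bieleckiPicard F hab c h z) (Icc a b) := by
  have hprimitive := intervalIntegral.continuousOn_primitive_interval_left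
    ((intervalIntegrable_iff' (by simp)).1 hint)
  rw [uIcc_of_le hab] at hprimitive
  unfold bieleckiPicard
  fun_prop

theorem dist_bieleckiPicard_le (hab : a ≤ b) (hF : ∀ t ∈ Icc a b, LipschitzWith K (F t))
    {z w : C(Icc a b, E)}
    (hz : IntervalIntegrable (fun s => F s (bieleckiExtend hab (2 * K) z s)) volume a b)
    (hw : IntervalIntegrable (fun s => F s (bieleckiExtend hab (2 * K) w s)) volume a b)
    (h : E) {t : ℝ} (ht : t ∈ Icc a b) :
    dist (bieleckiPicard F hab (2 * K) h z t) (bieleckiPicard F hab (2 * K) h w t)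
      ≤ dist z w / 2 := by
  have hsub : uIcc t b ⊆ uIcc a b := uIcc_subset_uIcc_right (Icc_subset_uIcc ht)
  have hbound := norm_integral_sub_integral_le_exp ht.2 dist_nonneg
    (fun s hs => hF s ⟨ht.1.trans hs.1, hs.2⟩) (hz.mono_set hsub) (hw.mono_set hsub)
    (fun s _ => norm_bieleckiExtend_sub_le hab (2 * K) z w s)
  rw [bieleckiPicard, bieleckiPicard, dist_eq_norm, ← smul_sub, norm_smul,
    Real.norm_of_nonneg (Real.exp_nonneg _), add_sub_add_left_eq_sub]
  calc Real.exp (-(2 * K * (b - t))) * _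
      ≤ Real.exp (-(2 * K * (b - t))) * (Real.exp (2 * K * (b - t)) * (dist z w / 2)) := by
        gcongr
    _ = dist z w / 2 := by
        rw [← mul_assoc, ← Real.exp_add, neg_add_cancel, Real.exp_zero, one_mul]

theorem exists_isBackwardSolution_of_lipschitzWith [CompleteSpace E] (hab : a ≤ b)
    (hF : ∀ t ∈ Icc a b, LipschitzWith K (F t))
    (hint : ∀ y : ℝ → E, Continuous y → IntervalIntegrable (fun s => F s (y s)) volume a b)
    (h : E) : ∃ y, IsBackwardSolution F a b h y := by
  have hint_ext (z : C(Icc a b, E)) :=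
    hint _ (continuous_bieleckiExtend hab (2 * K) z)
  let picard (z : C(Icc a b, E)) : C(Icc a b, E) :=
    ⟨fun t => bieleckiPicard F hab (2 * K) h z t,
      (continuousOn_bieleckiPicard hab (2 * K) h (hint_ext z)).domRestrict⟩
  have hcontracting : ContractingWith (1 / 2) picard := by
    refine ⟨by norm_num, LipschitzWith.of_dist_le_mul fun z w => ?_⟩
    refine (ContinuousMap.dist_le (by positivity)).2 fun t => ?_
    refine (dist_bieleckiPicard_le hab hF (hint_ext z) (hint_ext w) h t.2).trans_eq ?_
    push_cast
    ring
  let z := hcontracting.fixedPoint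
  refine ⟨bieleckiExtend hab (2 * K) z, (continuous_bieleckiExtend ..).continuousOn, fun t ht => ?_⟩
  have hfixed : bieleckiPicard F hab (2 * K) h z t = z ⟨t, ht⟩ :=
    DFunLike.congr_fun hcontracting.fixedPoint_isFixedPt ⟨t, ht⟩
  rw [bieleckiExtend, projIcc_of_mem hab ht, ← hfixed, bieleckiPicard, smul_smul, ← Real.exp_add,
    add_neg_cancel, Real.exp_zero, one_smul]

end GloballyLipschitz

section Comparison

theorem le_of_forall_sub_le_sub_of_lt {u v : ℝ → ℝ} {a b : ℝ} (hu : ContinuousOn u (Icc a b))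
    (hv : ContinuousOn v (Icc a b)) (hb : u b ≤ v b)
    (hsub : ∀ s t, a ≤ s → s ≤ t → t ≤ b → (∀ r ∈ Ioo s t, v r < u r) → u s - u t ≤ v s - v t) :
    ∀ t ∈ Icc a b, u t ≤ v t := by
  intro t ht
  have htb : Icc t b ⊆ Icc a b := Icc_subset_Icc_left ht.1
  have hclosed : IsClosed {s ∈ Icc t b | u s ≤ v s} :=
    isClosed_Icc.isClosed_le (hu.mono htb) (hv.mono htb)
  obtain ⟨s, ⟨hs, hus⟩, hleast⟩ :=
    (isCompact_Icc.of_isClosed_subset hclosed (sep_subset _ _)).exists_isLeast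
      ⟨b, right_mem_Icc.2 ht.2, hb⟩
  have hlt : ∀ r ∈ Ioo t s, v r < u r := fun r hr => by
    by_contra! hle
    exact hr.2.not_ge (hleast ⟨⟨hr.1.le, hr.2.le.trans hs.2⟩, hle⟩)
  linarith [hsub t s ht.1 hs.1 hs.2 hlt]

end Comparison

section Caratheodory

theorem aestronglyMeasurable_comp_of_continuous_of_stronglyMeasurable {Ω X Y : Type*}
    [MeasurableSpace Ω] [TopologicalSpace X] [TopologicalSpace.MetrizableSpace X]
    [SecondCountableTopology X] [MeasurableSpace X] [OpensMeasurableSpace X] [TopologicalSpace Y]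
    [TopologicalSpace.PseudoMetrizableSpace Y] [Zero Y] {μ : Measure Ω} {S : Set Ω}
    {F : Ω → X → Y} {y : Ω → X} (hS : MeasurableSet S)
    (hmeas : ∀ x, StronglyMeasurable fun ω => F ω x) (hcont : ∀ ω ∈ S, Continuous (F ω))
    (hy : Measurable y) : AEStronglyMeasurable (fun ω => F ω (y ω)) (μ.restrict S) := by
  have huncurry : StronglyMeasurable (Function.uncurry fun x => S.indicator fun ω => F ω x) := by
    refine stronglyMeasurable_uncurry_of_continuous_of_stronglyMeasurable (fun ω => ?_)
      fun x => (hmeas x).indicator hS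
    by_cases hω : ω ∈ S
    · simpa only [indicator_of_mem hω] using hcont ω hω
    · simpa only [indicator_of_notMem hω] using continuous_const
  refine (huncurry.comp_measurable (hy.prodMk measurable_id)).aestronglyMeasurable.congr ?_
  filter_upwards [ae_restrict_mem hS] with ω hω
  simp [Function.uncurry, hω]

/-- Generators that are measurable in time and, uniformly over times in `I`, Lipschitz and bounded
in the state variable on `J`. -/
structure IsLipschitzCaratheodoryOn (F : ℝ → ℝ → ℝ) (L : ℝ≥0) (B : ℝ) (I J : Set ℝ) : Prop where
  measurable : ∀ y ∈ J, Measurable fun t => F t y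
  lipschitzOnWith : ∀ t ∈ I, LipschitzOnWith L (F t) J
  abs_le : ∀ t ∈ I, ∀ y ∈ J, |F t y| ≤ B

theorem IsLipschitzCaratheodoryOn.integrableOn_comp {F : ℝ → ℝ → ℝ} {L : ℝ≥0} {B a b : ℝ}
    {J : Set ℝ} {y : ℝ → ℝ} (hF : IsLipschitzCaratheodoryOn F L B (Icc a b) J) (hab : a ≤ b)
    (hy : ContinuousOn y (Icc a b)) (hyJ : MapsTo y (Icc a b) J) :
    IntegrableOn (fun s => F s (y s)) (Icc a b) := by
  let yJ : ℝ → J := hyJ.restrict ∘ projIcc a b hab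
  have hyJ_meas : Measurable yJ := ((hy.mapsToRestrict hyJ).comp continuous_projIcc).measurable
  have hyJ_eq : ∀ s ∈ Icc a b, (yJ s : ℝ) = y s := fun s hs => by
    simp [yJ, projIcc_of_mem hab hs]
  have hmeas : AEStronglyMeasurable (fun s => F s (yJ s)) (volume.restrict (Icc a b)) :=
    aestronglyMeasurable_comp_of_continuous_of_stronglyMeasurable
      (F := fun s (x : J) => F s x) measurableSet_Icc
      (fun x => (hF.measurable x x.2).stronglyMeasurable)
      (fun s hs => (hF.lipschitzOnWith s hs).continuousOn.domRestrict) hyJ_meas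
  refine IntegrableOn.of_bound measure_Icc_lt_top (hmeas.congr ?_) B ?_
  · filter_upwards [ae_restrict_mem measurableSet_Icc] with s hs
    rw [hyJ_eq s hs]
  · filter_upwards [ae_restrict_mem measurableSet_Icc] with s hs
    exact hF.abs_le s hs _ (hyJ hs)

end Caratheodory

section Barriers

/-- Subsolutions of `-y' = F(t, y)` on `[a, b]`, in integrated form: barriers from below. -/
def IsLowerSolution (F : ℝ → ℝ → ℝ) (a b : ℝ) (α : ℝ → ℝ) : Prop :=
  ContinuousOn α (Icc a b) ∧
    ∀ s t, a ≤ s → s ≤ t → t ≤ b → α s - α t ≤ ∫ r in s..t, F r (α r)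

/-- Supersolutions of `-y' = F(t, y)` on `[a, b]`, in integrated form: barriers from above. -/
def IsUpperSolution (F : ℝ → ℝ → ℝ) (a b : ℝ) (β : ℝ → ℝ) : Prop :=
  ContinuousOn β (Icc a b) ∧
    ∀ s t, a ≤ s → s ≤ t → t ≤ b → ∫ r in s..t, F r (β r) ≤ β s - β t

/-- The generator `F` with its state variable projected onto `[α t, β t]`. -/
def truncatedGenerator (F : ℝ → ℝ → ℝ) (α β : ℝ → ℝ) (t y : ℝ) : ℝ :=
  F t (max (α t) (min (β t) y))

variable {F : ℝ → ℝ → ℝ} {L : ℝ≥0} {B a b h : ℝ} {J : Set ℝ} {α β y : ℝ → ℝ}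

theorem isLowerSolution_const {c : ℝ} (hc : ∀ t ∈ Icc a b, 0 ≤ F t c) :
    IsLowerSolution F a b fun _ => c := by
  refine ⟨continuousOn_const, fun s t hs hst ht => ?_⟩
  rw [sub_self]
  exact intervalIntegral.integral_nonneg hst fun r hr => hc r ⟨hs.trans hr.1, hr.2.trans ht⟩

theorem isUpperSolution_of_hasDerivAt {β' : ℝ → ℝ} (hβ : ∀ t ∈ Icc a b, HasDerivAt β (β' t) t)
    (hint : IntegrableOn (fun t => F t (β t)) (Icc a b))
    (hle : ∀ t ∈ Icc a b, F t (β t) ≤ -β' t) : IsUpperSolution F a b β := by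
  have hcont : ContinuousOn β (Icc a b) := fun t ht => (hβ t ht).continuousAt.continuousWithinAt
  refine ⟨hcont, fun s t hs hst ht => ?_⟩
  have hsub : Icc s t ⊆ Icc a b := Icc_subset_Icc hs ht
  have hmem {r : ℝ} (hr : r ∈ Ioo s t) : r ∈ Icc a b := hsub (Ioo_subset_Icc_self hr)
  have := intervalIntegral.integral_le_sub_of_hasDeriv_right_of_le hst (hcont.mono hsub).neg
    (fun r hr => (hβ r (hmem hr)).neg.hasDerivWithinAt) (hint.mono_set hsub)
    fun r hr => hle r (hmem hr)
  simp only [Pi.neg_apply] at this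
  linarith

theorem IsBackwardSolution.apply_right (hy : IsBackwardSolution F a b h y) (hab : a ≤ b) :
    y b = h := by
  simpa using hy.2 b (right_mem_Icc.2 hab)

theorem IsBackwardSolution.sub_eq_integral (hy : IsBackwardSolution F a b h y)
    (hint : IntegrableOn (fun s => F s (y s)) (Icc a b)) {s t : ℝ} (hs : a ≤ s) (hst : s ≤ t)
    (ht : t ≤ b) : y s - y t = ∫ r in s..t, F r (y r) := by
  have hint' {p q : ℝ} (hp : a ≤ p) (hpq : p ≤ q) (hq : q ≤ b) :
      IntervalIntegrable (fun r => F r (y r)) volume p q :=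
    (intervalIntegrable_iff_integrableOn_Icc_of_le hpq).2 (hint.mono_set (Icc_subset_Icc hp hq))
  rw [hy.2 s ⟨hs, hst.trans ht⟩, hy.2 t ⟨hs.trans hst, ht⟩,
    ← intervalIntegral.integral_add_adjacent_intervals (hint' hs hst ht)
      (hint' (hs.trans hst) ht le_rfl)]
  ring

theorem IsUpperSolution.le_of_isBackwardSolution_truncatedGenerator
    (hβ : IsUpperSolution F a b β) (hαβ : ∀ t ∈ Icc a b, α t ≤ β t) (hab : a ≤ b) (hh : h ≤ β b)
    (hy : IsBackwardSolution (truncatedGenerator F α β) a b h y)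
    (hint : IntegrableOn (fun s => truncatedGenerator F α β s (y s)) (Icc a b)) :
    ∀ t ∈ Icc a b, y t ≤ β t := by
  refine le_of_forall_sub_le_sub_of_lt hy.1 hβ.1 ((hy.apply_right hab).trans_le hh)
    fun s t hs hst ht habove => ?_
  have htrunc : ∀ r ∈ Ioo s t, truncatedGenerator F α β r (y r) = F r (β r) := fun r hr => by
    rw [truncatedGenerator, min_eq_left (habove r hr).le,
      max_eq_right (hαβ r ⟨hs.trans hr.1.le, hr.2.le.trans ht⟩)]
  rw [hy.sub_eq_integral hint hs hst ht, intervalIntegral.integral_congr_Ioo_of_le hst htrunc]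
  exact hβ.2 s t hs hst ht

theorem IsLowerSolution.le_of_isBackwardSolution_truncatedGenerator
    (hα : IsLowerSolution F a b α) (hab : a ≤ b) (hh : α b ≤ h)
    (hy : IsBackwardSolution (truncatedGenerator F α β) a b h y)
    (hint : IntegrableOn (fun s => truncatedGenerator F α β s (y s)) (Icc a b)) :
    ∀ t ∈ Icc a b, α t ≤ y t := by
  refine le_of_forall_sub_le_sub_of_lt hα.1 hy.1 (hh.trans_eq (hy.apply_right hab).symm)
    fun s t hs hst ht hbelow => ?_
  have htrunc : ∀ r ∈ Ioo s t, truncatedGenerator F α β r (y r) = F r (α r) := fun r hr => by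
    rw [truncatedGenerator, max_eq_left ((min_le_right _ _).trans (hbelow r hr).le)]
  rw [hy.sub_eq_integral hint hs hst ht, intervalIntegral.integral_congr_Ioo_of_le hst htrunc]
  exact hα.2 s t hs hst ht

theorem IsLipschitzCaratheodoryOn.lipschitzWith_truncatedGenerator
    (hF : IsLipschitzCaratheodoryOn F L B (Icc a b) J) (hαβ : ∀ t ∈ Icc a b, α t ≤ β t)
    (hJ : ∀ t ∈ Icc a b, Icc (α t) (β t) ⊆ J) :
    ∀ t ∈ Icc a b, LipschitzWith L (truncatedGenerator F α β t) := by
  intro t ht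
  have hproj : LipschitzWith 1 fun y => max (α t) (min (β t) y) :=
    (LipschitzWith.id.const_min _).const_max _
  have hmaps : MapsTo (fun y => max (α t) (min (β t) y)) univ J := fun y _ =>
    hJ t ht ⟨le_max_left _ _, max_le (hαβ t ht) (min_le_left _ _)⟩
  have hcomp := (hF.lipschitzOnWith t ht).comp hproj.lipschitzOnWith hmaps
  rwa [mul_one, lipschitzOnWith_univ] at hcomp

theorem IsLipschitzCaratheodoryOn.integrableOn_truncatedGenerator
    (hF : IsLipschitzCaratheodoryOn F L B (Icc a b) J) (hab : a ≤ b)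
    (hα : ContinuousOn α (Icc a b)) (hβ : ContinuousOn β (Icc a b))
    (hαβ : ∀ t ∈ Icc a b, α t ≤ β t) (hJ : ∀ t ∈ Icc a b, Icc (α t) (β t) ⊆ J)
    (hy : ContinuousOn y (Icc a b)) :
    IntegrableOn (fun s => truncatedGenerator F α β s (y s)) (Icc a b) :=
  hF.integrableOn_comp hab (hα.sup (hβ.inf hy)) fun t ht =>
    hJ t ht ⟨le_max_left _ _, max_le (hαβ t ht) (min_le_left _ _)⟩

theorem IsBackwardSolution.of_truncatedGenerator
    (hy : IsBackwardSolution (truncatedGenerator F α β) a b h y)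
    (hmem : ∀ t ∈ Icc a b, y t ∈ Icc (α t) (β t)) : IsBackwardSolution F a b h y := by
  refine ⟨hy.1, fun t ht => ?_⟩
  rw [hy.2 t ht]
  congr 1
  refine intervalIntegral.integral_congr fun s hs => ?_
  rw [uIcc_of_le ht.2] at hs
  have hys := hmem s ⟨ht.1.trans hs.1, hs.2⟩
  simp only [truncatedGenerator, min_eq_right hys.2, max_eq_right hys.1]

theorem exists_isBackwardSolution_mem_Icc_of_isLowerSolution_of_isUpperSolution
    (hF : IsLipschitzCaratheodoryOn F L B (Icc a b) J) (hab : a ≤ b)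
    (hα : IsLowerSolution F a b α) (hβ : IsUpperSolution F a b β)
    (hαβ : ∀ t ∈ Icc a b, α t ≤ β t) (hJ : ∀ t ∈ Icc a b, Icc (α t) (β t) ⊆ J)
    (hh : h ∈ Icc (α b) (β b)) :
    ∃ y, IsBackwardSolution F a b h y ∧ ∀ t ∈ Icc a b, y t ∈ Icc (α t) (β t) := by
  have hint {y : ℝ → ℝ} (hy : ContinuousOn y (Icc a b)) :
      IntegrableOn (fun s => truncatedGenerator F α β s (y s)) (Icc a b) :=
    hF.integrableOn_truncatedGenerator hab hα.1 hβ.1 hαβ hJ hy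
  obtain ⟨y, hy⟩ := exists_isBackwardSolution_of_lipschitzWith hab
    (hF.lipschitzWith_truncatedGenerator hαβ hJ)
    (fun y hy => (intervalIntegrable_iff_integrableOn_Icc_of_le hab).2 (hint hy.continuousOn)) h
  have hmem : ∀ t ∈ Icc a b, y t ∈ Icc (α t) (β t) := fun t ht =>
    ⟨hα.le_of_isBackwardSolution_truncatedGenerator hab hh.1 hy (hint hy.1) t ht,
      hβ.le_of_isBackwardSolution_truncatedGenerator hαβ hab hh.2 hy (hint hy.1) t ht⟩
  exact ⟨y, hy.of_truncatedGenerator hmem, hmem⟩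

end Barriers

section LinearGrowth

variable {F : ℝ → ℝ → ℝ} {L : ℝ≥0} {B a b h lam δ K ε : ℝ}

theorem gronwallBound_sub_mem_Icc (hδ : 0 ≤ δ) (hK : 0 ≤ K) (hε : 0 ≤ ε) {t : ℝ}
    (ht : t ∈ Icc a b) :
    gronwallBound δ K ε (b - t) ∈ Icc δ (gronwallBound δ K ε (b - a)) := by
  have hmono := gronwallBound_mono hδ hε hK
  constructor
  · simpa only [gronwallBound_x0] using hmono (sub_nonneg.2 ht.2)
  · exact hmono (sub_le_sub_left ht.1 b)

theorem isUpperSolution_gronwallBound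
    (hint : IntegrableOn (fun t => F t (gronwallBound δ K ε (b - t))) (Icc a b))
    (hle : ∀ t ∈ Icc a b, F t (gronwallBound δ K ε (b - t))
      ≤ K * gronwallBound δ K ε (b - t) + ε) :
    IsUpperSolution F a b fun t => gronwallBound δ K ε (b - t) := by
  refine isUpperSolution_of_hasDerivAt
    (β' := fun t => -(K * gronwallBound δ K ε (b - t) + ε)) (fun t _ => ?_) hint
    fun t ht => (hle t ht).trans_eq (neg_neg _).symm
  exact (hasDerivAt_gronwallBound δ K ε (b - t)).comp_const_sub b t

theorem exists_isBackwardSolution_mem_Icc_gronwallBound (hab : a ≤ b) (hδ : 0 ≤ δ) (hK : 0 ≤ K)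
    (hε : 0 ≤ ε)
    (hF : IsLipschitzCaratheodoryOn F L B (Icc a b) (Icc lam (gronwallBound δ K ε (b - a))))
    (hh : h ∈ Icc lam δ) (hlam : ∀ t ∈ Icc a b, 0 ≤ F t lam)
    (hgrowth : ∀ t ∈ Icc a b, ∀ y ∈ Icc 0 (gronwallBound δ K ε (b - a)), F t y ≤ K * y + ε) :
    ∃ y, IsBackwardSolution F a b h y ∧
      ∀ t ∈ Icc a b, y t ∈ Icc lam (gronwallBound δ K ε (b - a)) := by
  have hrange {t : ℝ} (ht : t ∈ Icc a b) := gronwallBound_sub_mem_Icc hδ hK hε ht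
  have hlam_le : ∀ t ∈ Icc a b, lam ≤ gronwallBound δ K ε (b - t) := fun t ht =>
    (hh.1.trans hh.2).trans (hrange ht).1
  have hcont : Continuous fun t => gronwallBound δ K ε (b - t) :=
    continuous_iff_continuousAt.2 fun t =>
      ((hasDerivAt_gronwallBound δ K ε (b - t)).comp_const_sub b t).continuousAt
  have hupper : IsUpperSolution F a b fun t => gronwallBound δ K ε (b - t) :=
    isUpperSolution_gronwallBound
      (hF.integrableOn_comp hab hcont.continuousOn fun t ht => ⟨hlam_le t ht, (hrange ht).2⟩)
      fun t ht => hgrowth t ht _ ⟨hδ.trans (hrange ht).1, (hrange ht).2⟩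
  obtain ⟨y, hy, hmem⟩ := exists_isBackwardSolution_mem_Icc_of_isLowerSolution_of_isUpperSolution
    hF hab (isLowerSolution_const hlam) hupper hlam_le
    (fun t ht => Icc_subset_Icc_right (hrange ht).2)
    ⟨hh.1, hh.2.trans (hrange (right_mem_Icc.2 hab)).1⟩
  exact ⟨y, hy, fun t ht => ⟨(hmem t ht).1, (hmem t ht).2.trans (hrange ht).2⟩⟩

end LinearGrowth

/-- Bounded solutions of the dominating ODEs under the one-sided smallness
condition with a subsolution level `λ ≤ h̲` (Theorem 5.5 (ii)). -/
theorem stmt7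
    (T : ℝ) (hT : 0 < T)
    (Fl Fu : ℝ → ℝ → ℝ)
    (hle : ∀ t ∈ Icc (0:ℝ) T, ∀ y : ℝ, Fl t y ≤ Fu t y)
    (hmeasu : ∀ y : ℝ, Measurable fun t => Fu t y)
    (hmeasl : ∀ y : ℝ, Measurable fun t => Fl t y)
    (hreg : ∀ M : ℝ, 0 < M → ∃ L K : ℝ,
      ∀ t ∈ Icc (0:ℝ) T,
        LipschitzOnWith (Real.toNNReal L) (fun y => Fu t y) (Icc (-M) M) ∧
        LipschitzOnWith (Real.toNNReal L) (fun y => Fl t y) (Icc (-M) M) ∧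
        ∀ y ∈ Icc (-M) M, |Fu t y| ≤ K ∧ |Fl t y| ≤ K)
    (hl hu : ℝ) (hlu : hl ≤ hu)
    (lam C1 C0 ε : ℝ) (hlam : lam ≤ hl) (hC1 : 0 < C1) (hC0 : 0 ≤ C0) (hε : 0 < ε)
    (hsub : ∀ t ∈ Icc (0:ℝ) T, 0 ≤ Fl t lam)
    (hgrowu : ∀ t ∈ Icc (0:ℝ) T, ∀ y : ℝ, 0 ≤ y →
      Fu t y ≤ 2 * ε * y ^ 3 + C1 * y + C0)
    (hεsmall : 2 * ε *
        (Real.exp (C1 * T) * max hu 0 +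
          ((C0 + 1) / C1) * (Real.exp (C1 * T) - 1)) ^ 3 ≤ 1) :
    ∃ yu yl : ℝ → ℝ,
      ContinuousOn yu (Icc 0 T) ∧ ContinuousOn yl (Icc 0 T) ∧
      (∀ t ∈ Icc (0:ℝ) T, yu t = hu + ∫ s in t..T, Fu s (yu s)) ∧
      (∀ t ∈ Icc (0:ℝ) T, yl t = hl + ∫ s in t..T, Fl s (yl s)) ∧
      (∀ t ∈ Icc (0:ℝ) T, lam ≤ yl t ∧
        yl t ≤ Real.exp (C1 * T) * max hu 0 +
          ((C0 + 1) / C1) * (Real.exp (C1 * T) - 1)) ∧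
      (∀ t ∈ Icc (0:ℝ) T, lam ≤ yu t ∧
        yu t ≤ Real.exp (C1 * T) * max hu 0 +
          ((C0 + 1) / C1) * (Real.exp (C1 * T) - 1)) := by
  have hC2 : Real.exp (C1 * T) * max hu 0 + ((C0 + 1) / C1) * (Real.exp (C1 * T) - 1)
      = gronwallBound (max hu 0) C1 (C0 + 1) (T - 0) := by
    rw [gronwallBound_of_K_ne_0 hC1.ne', sub_zero, mul_comm (Real.exp _)]
  rw [hC2] at hεsmall ⊢
  set C2 := gronwallBound (max hu 0) C1 (C0 + 1) (T - 0)
  have hgrowth : ∀ t ∈ Icc 0 T, ∀ y ∈ Icc 0 C2, Fu t y ≤ C1 * y + (C0 + 1) := fun t ht y hy => by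
    have hcubic : 2 * ε * y ^ 3 ≤ 2 * ε * C2 ^ 3 := by gcongr; exacts [hy.1, hy.2]
    linarith [hgrowu t ht y hy.1]
  obtain ⟨L, B, hLB⟩ := hreg (|lam| + |C2| + 1) (by positivity)
  have hJ : Icc lam C2 ⊆ Icc (-(|lam| + |C2| + 1)) (|lam| + |C2| + 1) := Icc_subset_Icc
    (by linarith [neg_abs_le lam, abs_nonneg C2]) (by linarith [le_abs_self C2, abs_nonneg lam])
  obtain ⟨yu, hyu, hyu_mem⟩ := exists_isBackwardSolution_mem_Icc_gronwallBound hT.le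
    (le_max_right hu 0) hC1.le (by positivity)
    ⟨fun y _ => hmeasu y, fun t ht => (hLB t ht).1.mono hJ,
      fun t ht y hy => ((hLB t ht).2.2 y (hJ hy)).1⟩
    ⟨hlam.trans hlu, le_max_left _ _⟩ (fun t ht => (hsub t ht).trans (hle t ht lam)) hgrowth
  obtain ⟨yl, hyl, hyl_mem⟩ := exists_isBackwardSolution_mem_Icc_gronwallBound hT.le
    (le_max_right hu 0) hC1.le (by positivity)
    ⟨fun y _ => hmeasl y, fun t ht => (hLB t ht).2.1.mono hJ,
      fun t ht y hy => ((hLB t ht).2.2 y (hJ hy)).2⟩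
    ⟨hlam, hlu.trans (le_max_left _ _)⟩ hsub fun t ht y hy => (hle t ht y).trans (hgrowth t ht y hy)
  exact ⟨yu, yl, hyu.1, hyl.1, hyu.2, hyl.2, hyl_mem, hyu_mem⟩
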